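/- Let V be a real normed vector space with 2 ≤ dim V < ∞ and let B ⊆ V be a compact convex set with nonempty interior. Then the Minkowski difference set satisfies {x − y : x, y ∈ B} = {x − y : x, y ∈ frontier B}. -/

import Mathlib

/-!
Fix `x, y ∈ B` and put `v = x - y`; the case `v = 0` only needs `∂B ≠ ∅`. For `v ≠ 0`, the boundary
`∂B` is connected, being homeomorphic to a sphere in dimension at least two
(`isConnected_frontier_of_convex`). It is covered by the closed sets `{a | a - v ∈ B}` and
`{a | a - v ∉ interior B}`, and any common point `a ∈ ∂B` satisfies `a - v ∈ ∂B`. Both sets meet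
`∂B`: with `g` a continuous functional such that `g v = 1`, the first contains a maximiser of `g`
over `B ∩ (B + v)`, and the second contains a minimiser of `g` over `B`; neither point can be
interior to `B`, since it could then be moved a little further along `±v`.
-/

open scoped Pointwise
open Set

noncomputable section

theorem isConnected_frontier_of_convex {V : Type*} [NormedAddCommGroup V] [NormedSpace ℝ V]
    [FiniteDimensional ℝ V] (hdim : 2 ≤ Module.finrank ℝ V)
    {B : Set V} (hBcpt : IsCompact B) (hBconv : Convex ℝ B) (hBint : (interior B).Nonempty) :
    IsConnected (frontier B) := by
  obtain ⟨h, -, -, hf⟩ := exists_homeomorph_image_interior_closure_frontier_eq_unitBall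
    hBconv hBint hBcpt.isBounded
  have hrank : 1 < Module.rank ℝ V := by
    rw [← Module.finrank_eq_rank]
    exact_mod_cast hdim
  rw [← h.isConnected_image, hf]
  exact isConnected_sphere hrank 0 zero_le_one

theorem exists_add_smul_mem_of_mem_interior {V : Type*} [NormedAddCommGroup V] [NormedSpace ℝ V]
    {B : Set V} {a : V} (ha : a ∈ interior B) (v : V) :
    ∃ t : ℝ, 0 < t ∧ t ≤ 1 ∧ a + t • v ∈ B := by
  have hc : Filter.Tendsto (fun t : ℝ => a + t • v) (nhdsWithin 0 (Ioi 0)) (nhds a) := by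
    have : Continuous (fun t : ℝ => a + t • v) := by fun_prop
    simpa using (this.tendsto 0).mono_left nhdsWithin_le_nhds
  have h1 := Filter.mem_map.1 <| hc (mem_interior_iff_mem_nhds.1 ha)
  have h2 : Ioc (0 : ℝ) 1 ∈ nhdsWithin (0 : ℝ) (Ioi 0) := Ioc_mem_nhdsGT one_pos
  obtain ⟨t, ht, ht'⟩ := Filter.nonempty_of_mem (Filter.inter_mem h1 h2)
  exact ⟨t, ht'.1, ht'.2, ht⟩

/-- **Minkowski difference via the boundary.** For a compact convex set `B` with nonempty
interior in a real normed space `V` of dimension at least `2`, one has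
`B - B = ∂B - ∂B`. -/
theorem stmt10 (V : Type*) [NormedAddCommGroup V] [NormedSpace ℝ V] [FiniteDimensional ℝ V]
    (hdim : 2 ≤ Module.finrank ℝ V)
    (B : Set V) (hBcpt : IsCompact B) (hBconv : Convex ℝ B)
    (hBint : (interior B).Nonempty) :
    B - B = frontier B - frontier B := by
  have hcl : IsClosed B := hBcpt.isClosed
  have hconn := isConnected_frontier_of_convex hdim hBcpt hBconv hBint
  have hfr : frontier B = B \ interior B := hcl.frontier_eq
  refine Subset.antisymm ?_ (sub_subset_sub hcl.frontier_subset hcl.frontier_subset)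
  rintro _ ⟨x, hx, y, hy, rfl⟩
  obtain ⟨v, rfl⟩ : ∃ v, y = x - v := ⟨x - y, by abel⟩
  suffices h : ∃ a ∈ frontier B, a - v ∈ frontier B by
    obtain ⟨a, ha, hav⟩ := h
    exact ⟨a, ha, a - v, hav, by simp⟩
  rcases eq_or_ne v 0 with rfl | hv
  · obtain ⟨a, ha⟩ := hconn.nonempty
    exact ⟨a, ha, by simpa using ha⟩
  obtain ⟨g, hg⟩ := SeparatingDual.exists_eq_one (R := ℝ) hv
  have hcont : Continuous fun a : V => a - v := by fun_prop
  have hS : IsClosed ((fun a : V => a - v) ⁻¹' B) := hcl.preimage hcont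
  have hT : IsClosed ((fun a : V => a - v) ⁻¹' (interior B)ᶜ) :=
    isOpen_interior.isClosed_compl.preimage hcont
  have h1 : (frontier B ∩ (fun a : V => a - v) ⁻¹' B).Nonempty := by
    obtain ⟨a, ⟨haB, hav⟩, hmax⟩ := (hBcpt.inter_right hS).exists_isMaxOn ⟨x, hx, hy⟩
      g.continuous.continuousOn
    refine ⟨a, ?_, hav⟩
    rw [hfr]
    refine ⟨haB, fun hai => ?_⟩
    obtain ⟨t, ht0, ht1, ht⟩ := exists_add_smul_mem_of_mem_interior hai v
    -- `a + t v - v` lies on the segment from `a - v` to `a`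
    have hmem : a + t • v - v ∈ B := by
      have := hBconv hav haB (sub_nonneg.2 ht1) ht0.le (by ring)
      convert this using 1
      module
    have := hmax ⟨ht, hmem⟩
    simp [hg] at this
    linarith
  have h2 : (frontier B ∩ (fun a : V => a - v) ⁻¹' (interior B)ᶜ).Nonempty := by
    obtain ⟨a, haB, hmin⟩ := hBcpt.exists_isMinOn ⟨x, hx⟩ g.continuous.continuousOn
    refine ⟨a, ?_, fun hav => ?_⟩
    · rw [hfr]
      refine ⟨haB, fun hai => ?_⟩
      obtain ⟨t, ht0, -, ht⟩ := exists_add_smul_mem_of_mem_interior hai (-v)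
      have := hmin ht
      simp [hg] at this
      linarith
    · have := hmin (interior_subset hav)
      simp [hg] at this
      linarith
  have hcover : frontier B ⊆
      (fun a : V => a - v) ⁻¹' B ∪ (fun a : V => a - v) ⁻¹' (interior B)ᶜ := fun a _ =>
    or_iff_not_imp_left.2 fun h hi => h (interior_subset (s := B) hi)
  obtain ⟨a, ha, haS, haT⟩ :=
    isPreconnected_closed_iff.1 hconn.isPreconnected _ _ hS hT hcover h1 h2
  exact ⟨a, ha, hfr ▸ ⟨haS, haT⟩⟩
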